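/- arXiv:1903.11953 — 2 statements merged into one kernel-verified Lean document; each statement's English description precedes it below -/
import Mathlib

section
/- Let p_n, p ∈ [1,∞] with p_n → p (in the sense that 1/p_n → 1/p, with 1/∞ = 0), and let u_n, u ∈ L¹(Q) with u_n → u strongly in L¹(Q). Then liminf_{n→∞} TV_{p_n}(u_n) ≥ TV_p(u). -/
/-!
Lower semicontinuity holds because the functional is a supremum of `L¹`-continuous functionals over
a test class depending continuously on `p`. On `ℝ^N` one has
`|x|_s ≤ N ^ |1/s - 1/r| * |x|_r` (`lpNorm_le_of_lpNorm_le_one`), and dualizing gives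
`|1/p_n* - 1/p*| = |1/p_n - 1/p| → 0`. Hence, for a field `φ` admissible for `p`, the rescaled
field `c_n⁻¹ φ` with `c_n = N ^ |1/p_n - 1/p|` is admissible for `p_n`, and `c_n → 1`. Since
`div φ` is bounded, `∫ u_n div (c_n⁻¹ φ) → ∫ u div φ`; comparing with `TV_{p_n}(u_n)` and taking the
supremum over `φ` gives the claim.
-/

open MeasureTheory Filter Topology ENNReal

noncomputable section

/-- The open unit cube `Q = (0,1)^N ⊆ ℝ^N`. -/
def Q (N : ℕ) : Set (Fin N → ℝ) := Set.univ.pi fun _ => Set.Ioo (0 : ℝ) 1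

/-- Lebesgue measure restricted to the unit cube. -/
def μQ (N : ℕ) : Measure (Fin N → ℝ) := volume.restrict (Q N)

/-- The `ℓ^p` norm on `ℝ^N`, for `p ∈ [1,∞]`. -/
def lpNorm {N : ℕ} (p : ℝ≥0∞) (x : Fin N → ℝ) : ℝ :=
  if p = ∞ then ⨆ i, |x i| else (∑ i, |x i| ^ p.toReal) ^ (1 / p.toReal)

/-- The Hölder conjugate exponent `p*`, so that `1/p + 1/p* = 1` (with `1/∞ = 0`). -/
def dualExp (p : ℝ≥0∞) : ℝ≥0∞ :=
  if p = 1 then ∞ else if p = ∞ then 1 else ENNReal.ofReal (p.toReal / (p.toReal - 1))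

/-- Divergence of a vector field on `ℝ^N`. -/
def diverg {N : ℕ} (φ : (Fin N → ℝ) → (Fin N → ℝ)) (x : Fin N → ℝ) : ℝ :=
  ∑ i, fderiv ℝ φ x (Pi.single i 1) i

/-- Admissible test vector fields for `TV_p`: smooth, compactly supported inside `Q`,
with pointwise dual `ℓ^{p*}` norm at most `1`. -/
def IsTest (N : ℕ) (p : ℝ≥0∞) (φ : (Fin N → ℝ) → (Fin N → ℝ)) : Prop :=
  ContDiff ℝ (⊤ : ℕ∞) φ ∧ HasCompactSupport φ ∧ tsupport φ ⊆ Q N ∧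
    ∀ x, lpNorm (dualExp p) (φ x) ≤ 1

/-- The `ℓ^p`-anisotropic total variation on `Q`, valued in `[0,∞]`:
`TV_p(u) = sup { ∫_Q u div φ : φ ∈ C_c^∞(Q;ℝ^N), |φ|_{p*} ≤ 1 }`. -/
def TV (N : ℕ) (p : ℝ≥0∞) (u : (Fin N → ℝ) → ℝ) : ℝ≥0∞ :=
  ⨆ (φ : (Fin N → ℝ) → (Fin N → ℝ)) (_ : IsTest N p φ),
    ENNReal.ofReal (∫ x in Q N, u x * diverg φ x)

/-- `u ∈ BV(Q)`: `u ∈ L¹(Q)` and `TV₂(u) < ∞`. -/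
def MemBV (N : ℕ) (u : (Fin N → ℝ) → ℝ) : Prop :=
  MeasureTheory.IntegrableOn u (Q N) ∧ TV N 2 u < ∞

/-- The `BV` norm `‖u‖_{L¹(Q)} + TV₂(u)`. -/
def bvNorm (N : ℕ) (u : (Fin N → ℝ) → ℝ) : ℝ≥0∞ :=
  eLpNorm u 1 (μQ N) + TV N 2 u

/-- The ROF functional `‖u − f‖²_{L²(Q)} + α · TV_p(u)`. -/
def rof (N : ℕ) (f : (Fin N → ℝ) → ℝ) (α : ℝ) (p : ℝ≥0∞)
    (u : (Fin N → ℝ) → ℝ) : ℝ≥0∞ :=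
  (eLpNorm (u - f) 2 (μQ N)) ^ 2 + ENNReal.ofReal α * TV N p u

/-- `u` minimizes the ROF functional over `BV(Q)`. -/
def IsMinimizer (N : ℕ) (f : (Fin N → ℝ) → ℝ) (α : ℝ) (p : ℝ≥0∞)
    (u : (Fin N → ℝ) → ℝ) : Prop :=
  MemBV N u ∧ ∀ v, MemBV N v → rof N f α p u ≤ rof N f α p v

/-- `u` is the (a.e.-unique) minimizer of the ROF functional over `BV(Q)`. -/
def IsUniqueMinimizer (N : ℕ) (f : (Fin N → ℝ) → ℝ) (α : ℝ) (p : ℝ≥0∞)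
    (u : (Fin N → ℝ) → ℝ) : Prop :=
  IsMinimizer N f α p u ∧ ∀ v, IsMinimizer N f α p v → v =ᵐ[μQ N] u

/-- With the convention `1/∞ = 0`, which here is `∞.toReal⁻¹ = 0`. -/
lemma dualExp_toReal_inv {p : ℝ≥0∞} (hp : 1 ≤ p) :
    (dualExp p).toReal⁻¹ = 1 - p.toReal⁻¹ := by
  unfold dualExp
  split_ifs with h1 h2
  · simp [h1]
  · simp [h2]
  · have h : 1 < p.toReal := by
      have := (ENNReal.toReal_lt_toReal ENNReal.one_ne_top h2).2 (lt_of_le_of_ne hp (Ne.symm h1))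
      simpa using this
    have h' : 0 < p.toReal - 1 := by linarith
    rw [ENNReal.toReal_ofReal (by positivity)]
    field_simp

lemma one_le_dualExp {p : ℝ≥0∞} (hp : 1 ≤ p) : 1 ≤ dualExp p := by
  unfold dualExp
  split_ifs with h1 h2
  · simp
  · simp
  · have h : 1 < p.toReal := by
      have := (ENNReal.toReal_lt_toReal ENNReal.one_ne_top h2).2 (lt_of_le_of_ne hp (Ne.symm h1))
      simpa using this
    rw [ENNReal.one_le_ofReal, le_div_iff₀ (by linarith)]
    linarith

lemma lpNorm_smul {N : ℕ} {s : ℝ≥0∞} (hs : 1 ≤ s) {c : ℝ} (hc : 0 ≤ c) (x : Fin N → ℝ) :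
    _root_.lpNorm s (c • x) = c * _root_.lpNorm s x := by
  unfold _root_.lpNorm
  split_ifs with h
  · simp [abs_mul, abs_of_nonneg hc, Real.mul_iSup_of_nonneg hc]
  · have hs0 : s.toReal ≠ 0 := by
      rw [ENNReal.toReal_ne_zero]
      exact ⟨fun h0 => by simp [h0] at hs, h⟩
    simp only [Pi.smul_apply, smul_eq_mul, abs_mul, abs_of_nonneg hc]
    simp_rw [Real.mul_rpow hc (abs_nonneg _)]
    rw [← Finset.mul_sum, Real.mul_rpow (by positivity)
      (Finset.sum_nonneg fun i _ => by positivity), one_div, Real.rpow_rpow_inv hc hs0]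

lemma one_le_toReal_of_ne_top {r : ℝ≥0∞} (hr : 1 ≤ r) (h : r ≠ ∞) : 1 ≤ r.toReal := by
  simpa using ENNReal.toReal_mono h hr

lemma sum_rpow_le_one {N : ℕ} {r : ℝ≥0∞} (hr : 1 ≤ r) (h : r ≠ ∞) {x : Fin N → ℝ}
    (hx : _root_.lpNorm r x ≤ 1) : ∑ i, |x i| ^ r.toReal ≤ 1 := by
  have h1 := one_le_toReal_of_ne_top hr h
  have h0 : 0 ≤ ∑ i, |x i| ^ r.toReal := Finset.sum_nonneg fun i _ => by positivity
  rw [_root_.lpNorm, if_neg h] at hx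
  by_contra! hlt
  exact absurd hx (not_le.2 (Real.one_lt_rpow hlt (by positivity)))

lemma abs_le_one_of_lpNorm_le_one {N : ℕ} {r : ℝ≥0∞} (hr : 1 ≤ r) {x : Fin N → ℝ}
    (hx : _root_.lpNorm r x ≤ 1) (i : Fin N) : |x i| ≤ 1 := by
  by_cases h : r = ∞
  · rw [_root_.lpNorm, if_pos h] at hx
    exact (le_ciSup (f := fun i => |x i|) (Set.finite_range _).bddAbove i).trans hx
  · have h1 := one_le_toReal_of_ne_top hr h
    have h2 : |x i| ^ r.toReal ≤ 1 :=
      (Finset.single_le_sum (f := fun i => |x i| ^ r.toReal) (fun j _ => by positivity)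
        (Finset.mem_univ i)).trans (sum_rpow_le_one hr h hx)
    by_contra! hlt
    exact absurd h2 (not_le.2 (Real.one_lt_rpow hlt (by positivity)))

/-- The comparison `|x|_s ≤ N ^ |1/s - 1/r| * |x|_r` on the unit ball of `|·|_r`: monotonicity of
`ℓ^s` norms when `r ≤ s`, the power mean inequality when `s < r`. -/
lemma lpNorm_le_of_lpNorm_le_one {N : ℕ} (hN : 1 ≤ N) {r s : ℝ≥0∞} (hr : 1 ≤ r) (hs : 1 ≤ s)
    {x : Fin N → ℝ} (hx : _root_.lpNorm r x ≤ 1) :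
    _root_.lpNorm s x ≤ (N : ℝ) ^ |s.toReal⁻¹ - r.toReal⁻¹| := by
  have hN' : (1 : ℝ) ≤ N := by exact_mod_cast hN
  have : Nonempty (Fin N) := ⟨⟨0, hN⟩⟩
  have hone : 1 ≤ (N : ℝ) ^ |s.toReal⁻¹ - r.toReal⁻¹| := Real.one_le_rpow hN' (abs_nonneg _)
  have hx1 := abs_le_one_of_lpNorm_le_one hr hx
  by_cases hst : s = ∞
  · rw [_root_.lpNorm, if_pos hst]
    exact (ciSup_le hx1).trans hone
  have hs1 := one_le_toReal_of_ne_top hs hst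
  have hs0 : 0 < s.toReal := by linarith
  have hsum0 : 0 ≤ ∑ i, |x i| ^ s.toReal := Finset.sum_nonneg fun i _ => by positivity
  rw [_root_.lpNorm, if_neg hst]
  by_cases hrt : r = ∞
  · have : ∑ i, |x i| ^ s.toReal ≤ N := by
      calc ∑ i, |x i| ^ s.toReal ≤ ∑ _i : Fin N, (1 : ℝ) :=
            Finset.sum_le_sum fun i _ => Real.rpow_le_one (abs_nonneg _) (hx1 i) hs0.le
        _ = N := by simp
    rw [hrt, ENNReal.toReal_top, _root_.inv_zero, sub_zero, abs_of_pos (by positivity), ← one_div]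
    exact Real.rpow_le_rpow hsum0 this (by positivity)
  have hr1 := one_le_toReal_of_ne_top hr hrt
  have hr0 : 0 < r.toReal := by linarith
  have hsumr := sum_rpow_le_one hr hrt hx
  rcases le_or_gt r.toReal s.toReal with hle | hlt
  · have : ∑ i, |x i| ^ s.toReal ≤ 1 := by
      refine (Finset.sum_le_sum fun i _ => ?_).trans hsumr
      rcases (abs_nonneg (x i)).eq_or_lt with h0 | h0
      · rw [← h0, Real.zero_rpow hs0.ne', Real.zero_rpow hr0.ne']
      · exact Real.rpow_le_rpow_of_exponent_ge h0 (hx1 i) hle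
    exact (Real.rpow_le_one hsum0 this (by positivity)).trans hone
  · have key := Real.rpow_sum_le_const_mul_sum_rpow (Finset.univ : Finset (Fin N))
      (fun i => |x i| ^ s.toReal) (p := r.toReal / s.toReal) ((one_le_div hs0).2 hlt.le)
    have e1 : ∀ i, |(|x i| ^ s.toReal)| = |x i| ^ s.toReal := fun i => abs_of_nonneg (by positivity)
    have e2 : ∀ i, (|x i| ^ s.toReal) ^ (r.toReal / s.toReal) = |x i| ^ r.toReal := fun i => by
      rw [← Real.rpow_mul (abs_nonneg _)]
      congr 1
      field_simp
    simp only [e1, e2, Finset.card_univ, Fintype.card_fin] at key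
    have key2 : (∑ i, |x i| ^ s.toReal) ^ (r.toReal / s.toReal)
        ≤ (N : ℝ) ^ (r.toReal / s.toReal - 1) :=
      key.trans (mul_le_of_le_one_right (by positivity) hsumr)
    have key3 := Real.rpow_le_rpow (by positivity) key2 (z := r.toReal⁻¹) (by positivity)
    rw [← Real.rpow_mul hsum0, ← Real.rpow_mul (by positivity)] at key3
    have hinv : r.toReal⁻¹ ≤ s.toReal⁻¹ := inv_anti₀ hs0 hlt.le
    rw [abs_of_nonneg (by linarith)]
    convert key3 using 2 <;> field_simp

lemma diverg_smul {N : ℕ} {φ : (Fin N → ℝ) → (Fin N → ℝ)} (hφ : ContDiff ℝ (⊤ : ℕ∞) φ) (c : ℝ)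
    (x : Fin N → ℝ) : diverg (c • φ) x = c * diverg φ x := by
  unfold diverg
  rw [fderiv_const_smul ((hφ.differentiable (by simp)) x)]
  simp [Finset.mul_sum]

lemma continuous_diverg {N : ℕ} {φ : (Fin N → ℝ) → (Fin N → ℝ)}
    (hφ : ContDiff ℝ (⊤ : ℕ∞) φ) : Continuous (diverg φ) := by
  have := hφ.continuous_fderiv (by simp)
  unfold diverg
  fun_prop

lemma exists_bound_diverg {N : ℕ} {φ : (Fin N → ℝ) → (Fin N → ℝ)}
    (hφ : ContDiff ℝ (⊤ : ℕ∞) φ) (hc : HasCompactSupport φ) : ∃ C, ∀ x, ‖diverg φ x‖ ≤ C := by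
  refine HasCompactSupport.exists_bound_of_continuous ?_ (continuous_diverg hφ)
  refine (hc.fderiv ℝ).comp_left (g := fun L : (Fin N → ℝ) →L[ℝ] (Fin N → ℝ) =>
    ∑ i, L (Pi.single i 1) i) (by simp)

/-- Integration against the bounded function `div φ` is continuous on `L¹(Q)`. -/
lemma tendsto_integral_mul_diverg {N : ℕ} {φ : (Fin N → ℝ) → (Fin N → ℝ)}
    (hφ : ContDiff ℝ (⊤ : ℕ∞) φ) (hc : HasCompactSupport φ)
    {un : ℕ → (Fin N → ℝ) → ℝ} {u : (Fin N → ℝ) → ℝ}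
    (hun : ∀ n, IntegrableOn (un n) (Q N)) (hu : IntegrableOn u (Q N))
    (hL1 : Tendsto (fun n => eLpNorm (un n - u) 1 (μQ N)) atTop (𝓝 0)) :
    Tendsto (fun n => ∫ x in Q N, un n x * diverg φ x) atTop
      (𝓝 (∫ x in Q N, u x * diverg φ x)) := by
  obtain ⟨C, hC⟩ := exists_bound_diverg hφ hc
  have hm : AEStronglyMeasurable (diverg φ) (volume.restrict (Q N)) :=
    (continuous_diverg hφ).aestronglyMeasurable
  have hint : ∀ v : (Fin N → ℝ) → ℝ, IntegrableOn v (Q N) →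
      Integrable (fun x => v x * diverg φ x) (volume.restrict (Q N)) := fun v hv =>
    hv.mul_bdd hm (Eventually.of_forall hC)
  refine tendsto_integral_of_L1' _ (hint u hu).1 (Eventually.of_forall fun n => hint _ (hun n)) ?_
  have hlim : Tendsto (fun n => ENNReal.ofReal C * eLpNorm (un n - u) 1 (μQ N)) atTop (𝓝 0) := by
    simpa using ENNReal.Tendsto.const_mul hL1 (Or.inr ENNReal.ofReal_ne_top)
  refine tendsto_of_tendsto_of_tendsto_of_le_of_le tendsto_const_nhds hlim
    (fun n => zero_le) fun n => ?_
  refine eLpNorm_le_mul_eLpNorm_of_ae_le_mul (Eventually.of_forall fun x => ?_) 1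
  have : un n x * diverg φ x - u x * diverg φ x = diverg φ x * (un n x - u x) := by ring
  simp only [Pi.sub_apply, this, norm_mul]
  exact mul_le_mul_of_nonneg_right (hC x) (norm_nonneg _)

/-- Rescaling turns a test field for `p` into a test field for any other exponent `q`. -/
lemma IsTest.rescale {N : ℕ} (hN : 1 ≤ N) {p q : ℝ≥0∞} (hp : 1 ≤ p) (hq : 1 ≤ q)
    {φ : (Fin N → ℝ) → (Fin N → ℝ)} (hφ : IsTest N p φ) :
    IsTest N q (((N : ℝ) ^ |q.toReal⁻¹ - p.toReal⁻¹|)⁻¹ • φ) := by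
  obtain ⟨h1, h2, h3, h4⟩ := hφ
  have hN' : (0 : ℝ) < N := by exact_mod_cast hN
  refine ⟨contDiff_const.smul h1, h2.smul_left (f := fun _ => _),
    (closure_mono (Function.support_const_smul_subset _ φ)).trans h3, fun x => ?_⟩
  have hpos : 0 < (N : ℝ) ^ |q.toReal⁻¹ - p.toReal⁻¹| := by positivity
  rw [Pi.smul_apply, lpNorm_smul (one_le_dualExp hq) (by positivity), inv_mul_le_one₀ hpos]
  have := lpNorm_le_of_lpNorm_le_one hN (one_le_dualExp hp) (one_le_dualExp hq) (h4 x)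
  rwa [dualExp_toReal_inv hp, dualExp_toReal_inv hq, abs_sub_comm, _root_.sub_sub_sub_cancel_left] at this

/-- If `p_n → p` in `[1,∞]` (in the sense `1/p_n → 1/p`) and
`u_n → u` strongly in `L¹(Q)`, then `liminf_n TV_{p_n}(u_n) ≥ TV_p(u)`. -/
theorem tv_liminf_lower_semicontinuity (N : ℕ) (hN : 1 ≤ N)
    (pn : ℕ → ℝ≥0∞) (p : ℝ≥0∞) (hpn : ∀ n, 1 ≤ pn n) (hp : 1 ≤ p)
    (hpconv : Tendsto (fun n => (pn n).toReal⁻¹) atTop (𝓝 p.toReal⁻¹))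
    (un : ℕ → (Fin N → ℝ) → ℝ) (u : (Fin N → ℝ) → ℝ)
    (hun : ∀ n, MeasureTheory.IntegrableOn (un n) (Q N))
    (hu : MeasureTheory.IntegrableOn u (Q N))
    (hL1 : Tendsto (fun n => eLpNorm (un n - u) 1 (μQ N)) atTop (𝓝 0)) :
    TV N p u ≤ liminf (fun n => TV N (pn n) (un n)) atTop := by
  refine iSup₂_le fun φ hφ => ?_
  have hN' : (0 : ℝ) < N := by exact_mod_cast hN
  have hc : Tendsto (fun n => ((N : ℝ) ^ |(pn n).toReal⁻¹ - p.toReal⁻¹|)⁻¹) atTop (𝓝 1) := by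
    have h0 : Tendsto (fun n => |(pn n).toReal⁻¹ - p.toReal⁻¹|) atTop (𝓝 0) := by
      simpa using (hpconv.sub_const p.toReal⁻¹).abs
    simpa using ((tendsto_const_nhds (x := (N : ℝ))).rpow h0 (Or.inl hN'.ne')).inv₀ (by simp)
  have hlim := ENNReal.tendsto_ofReal
    (hc.mul (tendsto_integral_mul_diverg hφ.1 hφ.2.1 hun hu hL1))
  rw [one_mul] at hlim
  rw [← hlim.liminf_eq]
  refine liminf_le_liminf (Eventually.of_forall fun n => ?_)
  refine le_trans (le_of_eq ?_) (le_iSup₂ (f := fun ψ (_ : IsTest N (pn n) ψ) =>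
    ENNReal.ofReal (∫ x in Q N, un n x * diverg ψ x)) _ (hφ.rescale hN hp (hpn n)))
  simp only [diverg_smul hφ.1, mul_left_comm (un n _)]
  rw [integral_const_mul]

end
end

section
/- Let u_η, u_c ∈ BV(Q) and α_U > 0, and set T := [0,α_U] × [1,∞]. For α > 0 and p ∈ [1,∞] let u_{α,p} be the unique minimizer over BV(Q) of u ↦ ‖u − u_η‖²_{L²(Q)} + α TV_p(u), set u_{0,p} := u_η, and define A(α,p) := ‖u_{α,p} − u_c‖_{L²(Q)}. Suppose (α*,p*) minimizes A over T and, for l ∈ ℕ, (α_l,p_l) minimizes A over the finite training ground T_l. Then 0 ≤ A(α_l,p_l) − A(α*,p*) ≤ ( (1/l)^{1/2} + 2 ( α_U (1 − N^{−1/√l}) )^{1/2} ) · ( TV_1(u_η) )^{1/2}. -/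
/-!
Fix a grid point `(a, q)` with `a ≤ αs`, `αs - a ≤ 1/l`, `ps ≤ q` and `1/ps - 1/q ≤ 1/l`. Minimality
of `(αl, pl)` on the grid and the triangle inequality reduce the claim to the distances between
`U αs ps`, `U a ps` and `U a q` in `L²(Q)`.

The ROF functional is strongly convex: testing the optimality of a minimizer `u` with the midpoint
`(u + v) / 2` and using the parallelogram law gives `IsMinimizer.strong`. Adding this for two
minimizers `u` at `(α, p)` and `v` at `(β, q)`, each tested with the other, yields
`‖u - v‖² ≤ α (TV_p v - TV_p u) + β (TV_q u - TV_q v)` (`IsMinimizer.dist_sq_le`).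

* For `p = q` the right side is at most `|α - β| TV_1(uη)`, since a minimizer has no more total
  variation than the datum and `TV_p ≤ TV_1` (`IsMinimizer.dist_alpha`).
* For `α = β` and `p ≤ q`, the comparison `TV_q ≤ TV_p ≤ N^{1/p - 1/q} TV_q` bounds it by
  `α (N^{1/p - 1/q} - 1) TV_1(uη)`. When `N^{-1/√l} ≥ 1/3` this is at most
  `4 α (1 - N^{-1/√l}) TV_1(uη)`. Otherwise the same bound follows from
  `‖u - uη‖² ≤ (2/3) α TV_1(uη)` for either minimizer (`IsMinimizer.dist_exponent`).

The comparison of total variations is dual to Hölder's inequality between the `ℓ^{p*}` unit balls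
of the test fields, as `1/p* = 1 - 1/p` (`RecBall.mono`, `RecBall.scale`). Distances are handled as
real numbers: each minimizer lies at finite `L²` distance from `uη`, even if `uη` is not in `L²`.
-/

open MeasureTheory Filter Topology ENNReal

noncomputable section

/-- The finite grid of regularization parameters
`T_l[α] = ⋃_{k=1}^{l} ({ i/k : i ∈ ℕ, i/k ≤ α_U } ∪ {α_U})`. -/
def gridAlpha (αU : ℝ) (l : ℕ) : Set ℝ :=
  ⋃ k ∈ Finset.Icc 1 l, ({x : ℝ | ∃ i : ℕ, x = (i : ℝ) / (k : ℝ) ∧ x ≤ αU} ∪ {αU})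

/-- The finite grid of exponents `T_l[p] = {∞} ∪ { k/i : k, i ∈ ℕ, 1 ≤ i ≤ k ≤ l }`. -/
def gridP (l : ℕ) : Set ℝ≥0∞ :=
  {∞} ∪ {q : ℝ≥0∞ | ∃ k i : ℕ, 1 ≤ i ∧ i ≤ k ∧ k ≤ l ∧ q = (k : ℝ≥0∞) / (i : ℝ≥0∞)}

/-! ### Comparison of the dual unit balls -/

/-- The unit ball of the `ℓ^{1/r}` norm on `ℝ^N`, for `r ∈ [0,1]`, with `1/0 = ∞`. Parametrizing
by the reciprocal exponent puts the distance `1/p - 1/q` in view. -/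
def RecBall {N : ℕ} (r : ℝ) (x : Fin N → ℝ) : Prop :=
  if r = 0 then ∀ i, |x i| ≤ 1 else ∑ i, |x i| ^ (1 / r) ≤ 1

/-- The reciprocal exponent `1/p`, with `1/∞ = 0`. -/
def recip (p : ℝ≥0∞) : ℝ := (p⁻¹).toReal

lemma recip_nonneg (p : ℝ≥0∞) : 0 ≤ recip p := ENNReal.toReal_nonneg

lemma recip_le_one {p : ℝ≥0∞} (hp : 1 ≤ p) : recip p ≤ 1 := by
  have : p⁻¹ ≤ 1 := ENNReal.inv_le_one.2 hp
  simpa [recip] using ENNReal.toReal_mono ENNReal.one_ne_top this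

lemma recip_one : recip 1 = 1 := by simp [recip]

lemma recip_anti {p q : ℝ≥0∞} (hp : 1 ≤ p) (hpq : p ≤ q) : recip q ≤ recip p := by
  refine ENNReal.toReal_mono ?_ (ENNReal.inv_le_inv.2 hpq)
  exact ENNReal.inv_ne_top.2 (by rintro rfl; simp at hp)

/-- The `ℓ^{p*}` unit ball has reciprocal exponent `1/p* = 1 - 1/p`. -/
lemma lpNorm_dualExp_le_one_iff {N : ℕ} {p : ℝ≥0∞} (hp : 1 ≤ p) (x : Fin N → ℝ) :
    _root_.lpNorm (dualExp p) x ≤ 1 ↔ RecBall (1 - recip p) x := by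
  by_cases h1 : p = 1
  · subst h1
    simp only [_root_.lpNorm, dualExp, RecBall, recip_one, if_true, sub_self]
    constructor
    · intro h i
      exact (le_ciSup (f := fun i => |x i|) (Set.finite_range _).bddAbove i).trans h
    · intro h
      exact Real.iSup_le h zero_le_one
  have key : ∀ s : ℝ, 0 < s →
      ((∑ i, |x i| ^ s) ^ (1 / s) ≤ 1 ↔ ∑ i, |x i| ^ s ≤ 1) := by
    intro s hs
    have h0 : 0 ≤ ∑ i, |x i| ^ s := Finset.sum_nonneg fun i _ => by positivity
    have := Real.rpow_le_rpow_iff h0 zero_le_one (one_div_pos.2 hs)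
    rwa [Real.one_rpow] at this
  by_cases ht : p = ∞
  · subst ht
    simp [_root_.lpNorm, dualExp, RecBall, recip]
  have hP : 1 < p.toReal := by
    have : 1 < p := lt_of_le_of_ne hp (Ne.symm h1)
    simpa using (ENNReal.toReal_lt_toReal ENNReal.one_ne_top ht).2 this
  have hs : 0 < p.toReal / (p.toReal - 1) := div_pos (by linarith) (by linarith)
  have hr : 1 - recip p = (p.toReal - 1) / p.toReal := by
    rw [recip, ENNReal.toReal_inv]; field_simp
  have hr0 : 1 - recip p ≠ 0 := by
    rw [hr]; exact (div_pos (by linarith) (by linarith)).ne'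
  have hr1 : 1 / (1 - recip p) = p.toReal / (p.toReal - 1) := by rw [hr, one_div_div]
  simp only [_root_.lpNorm, dualExp, RecBall, if_neg h1, if_neg ht, ENNReal.ofReal_ne_top, if_false,
    if_neg hr0, hr1, ENNReal.toReal_ofReal hs.le]
  exact key _ hs

lemma RecBall.abs_le {N : ℕ} {r : ℝ} (hr : 0 ≤ r) {x : Fin N → ℝ} (h : RecBall r x) (i : Fin N) :
    |x i| ≤ 1 := by
  unfold RecBall at h
  split_ifs at h with h0
  · exact h i
  have hpos : 0 < 1 / r := one_div_pos.2 (lt_of_le_of_ne hr (Ne.symm h0))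
  have h2 : |x i| ^ (1 / r) ≤ 1 :=
    (Finset.single_le_sum (f := fun i => |x i| ^ (1 / r))
      (fun j _ => by positivity) (Finset.mem_univ i)).trans h
  by_contra! hc
  exact absurd h2 (not_le.2 (Real.one_lt_rpow hc hpos))

lemma RecBall.mono {N : ℕ} {r t : ℝ} (hr : 0 ≤ r) (hrt : r ≤ t) {x : Fin N → ℝ}
    (h : RecBall t x) : RecBall r x := by
  have ha := h.abs_le (hr.trans hrt)
  by_cases hr0 : r = 0
  · simpa [RecBall, hr0] using ha
  have hrp : 0 < r := lt_of_le_of_ne hr (Ne.symm hr0)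
  have htp : 0 < t := hrp.trans_le hrt
  simp only [RecBall, if_neg hr0, if_neg htp.ne'] at h ⊢
  refine (Finset.sum_le_sum fun i _ => ?_).trans h
  exact Real.rpow_le_rpow_of_exponent_ge' (abs_nonneg _) (ha i) (by positivity)
    (one_div_le_one_div_of_le hrp hrt)

/-- Hölder's inequality: the `ℓ^{1/r}` ball lies in `N^{t-r}` times the `ℓ^{1/t}` ball. -/
lemma RecBall.scale {N : ℕ} (hN : 1 ≤ N) {r t : ℝ} (hr : 0 ≤ r) (hrt : r ≤ t) {x : Fin N → ℝ}
    (h : RecBall r x) : RecBall t ((N : ℝ) ^ (-(t - r)) • x) := by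
  have hNp : (0 : ℝ) < N := by exact_mod_cast hN
  by_cases ht0 : t = 0
  · have : r = 0 := le_antisymm (hrt.trans ht0.le) hr
    subst ht0; subst this; simpa using h
  have htp : 0 < t := lt_of_le_of_ne (hr.trans hrt) (Ne.symm ht0)
  have hsum : ∑ i, |x i| ^ (1 / t) ≤ (N : ℝ) ^ ((t - r) / t) := by
    by_cases hr0 : r = 0
    · have ha := h.abs_le hr
      subst hr0
      rw [sub_zero, div_self ht0, Real.rpow_one]
      calc ∑ i, |x i| ^ (1 / t) ≤ ∑ _i : Fin N, (1 : ℝ) :=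
            Finset.sum_le_sum fun i _ => Real.rpow_le_one (abs_nonneg _) (ha i) (by positivity)
        _ = N := by simp
    have hrp : 0 < r := lt_of_le_of_ne hr (Ne.symm hr0)
    simp only [RecBall, if_neg hr0] at h
    have h1 := Real.rpow_sum_le_const_mul_sum_rpow Finset.univ (fun i => |x i| ^ (1 / t))
      (p := t / r) ((one_le_div hrp).2 hrt)
    have h2 : ∀ i, |(|x i| ^ (1 / t))| = |x i| ^ (1 / t) := fun i => abs_of_nonneg (by positivity)
    have h3 : ∀ i, (|x i| ^ (1 / t)) ^ (t / r) = |x i| ^ (1 / r) := fun i => by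
      rw [← Real.rpow_mul (abs_nonneg _)]; congr 1; field_simp
    simp only [h2, h3, Finset.card_univ, Fintype.card_fin] at h1
    have h0 : 0 ≤ ∑ i, |x i| ^ (1 / t) := Finset.sum_nonneg fun i _ => by positivity
    have h4 : (∑ i, |x i| ^ (1 / t)) ^ (t / r) ≤ (N : ℝ) ^ (t / r - 1) :=
      h1.trans (mul_le_of_le_one_right (by positivity) h)
    have h5 : (N : ℝ) ^ (t / r - 1) = ((N : ℝ) ^ ((t - r) / t)) ^ (t / r) := by
      rw [← Real.rpow_mul hNp.le]; congr 1; field_simp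
    rw [h5] at h4
    exact (Real.rpow_le_rpow_iff h0 (by positivity) (by positivity)).1 h4
  simp only [RecBall, if_neg ht0, Pi.smul_apply, smul_eq_mul, abs_mul]
  have hc : |(N : ℝ) ^ (-(t - r))| = (N : ℝ) ^ (-(t - r)) := abs_of_nonneg (by positivity)
  have h6 : ∀ i, ((N : ℝ) ^ (-(t - r)) * |x i|) ^ (1 / t) =
      (N : ℝ) ^ (-((t - r) / t)) * |x i| ^ (1 / t) := fun i => by
    rw [Real.mul_rpow (by positivity) (abs_nonneg _), ← Real.rpow_mul hNp.le]
    congr 2; ring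
  simp only [hc, h6, ← Finset.mul_sum]
  calc (N : ℝ) ^ (-((t - r) / t)) * ∑ i, |x i| ^ (1 / t)
      ≤ (N : ℝ) ^ (-((t - r) / t)) * (N : ℝ) ^ ((t - r) / t) := by gcongr
    _ = 1 := by rw [← Real.rpow_add hNp]; simp

/-! ### The total variations -/

/-- Since `|x|_q ≤ |x|_p` for `p ≤ q`, also `TV_q ≤ TV_p`. -/
lemma TV_anti {N : ℕ} {p q : ℝ≥0∞} (hp : 1 ≤ p) (hpq : p ≤ q) (u : (Fin N → ℝ) → ℝ) :
    TV N q u ≤ TV N p u := by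
  have hq := hp.trans hpq
  refine iSup₂_le fun φ hφ => ?_
  refine le_iSup₂_of_le φ ⟨hφ.1, hφ.2.1, hφ.2.2.1, fun x => ?_⟩ le_rfl
  have := (lpNorm_dualExp_le_one_iff hq _).1 (hφ.2.2.2 x)
  exact (lpNorm_dualExp_le_one_iff hp _).2
    (this.mono (by linarith [recip_le_one hp]) (by linarith [recip_anti hp hpq]))

lemma TV_le_rpow_mul {N : ℕ} (hN : 1 ≤ N) {p q : ℝ≥0∞} (hp : 1 ≤ p) (hpq : p ≤ q)
    (u : (Fin N → ℝ) → ℝ) :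
    TV N p u ≤ ENNReal.ofReal ((N : ℝ) ^ (recip p - recip q)) * TV N q u := by
  have hq := hp.trans hpq
  have hNp : (0 : ℝ) < N := by exact_mod_cast hN
  set c : ℝ := (N : ℝ) ^ (-(recip p - recip q)) with hc
  have hcp : 0 < c := by positivity
  refine iSup₂_le fun φ hφ => ?_
  have htest : IsTest N q (c • φ) := by
    refine ⟨hφ.1.const_smul c, HasCompactSupport.smul_left (f := fun _ => c) hφ.2.1,
      (tsupport_smul_subset_right (fun _ => c) φ).trans hφ.2.2.1, fun x => ?_⟩
    have h1 := (lpNorm_dualExp_le_one_iff hp _).1 (hφ.2.2.2 x)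
    have h2 := h1.scale hN (t := 1 - recip q) (by linarith [recip_le_one hp])
      (by linarith [recip_anti hp hpq])
    refine (lpNorm_dualExp_le_one_iff hq _).2 ?_
    have e : c = (N : ℝ) ^ (-(1 - recip q - (1 - recip p))) := by rw [hc]; congr 1; ring
    rw [e]
    exact h2
  have hdiv : ∀ x, diverg (c • φ) x = c * diverg φ x := fun x => by
    have hd : DifferentiableAt ℝ φ x := hφ.1.differentiable (by simp) x
    simp [diverg, fderiv_const_smul hd, Finset.mul_sum]
  have hint : ∫ x in Q N, u x * diverg φ x =
      (N : ℝ) ^ (recip p - recip q) * ∫ x in Q N, u x * diverg (c • φ) x := by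
    rw [← integral_const_mul]
    congr 1; ext x
    have : (N : ℝ) ^ (recip p - recip q) * c = 1 := by
      rw [hc, ← Real.rpow_add hNp]; simp
    rw [hdiv]; linear_combination (-(u x * diverg φ x)) * this
  rw [hint, ENNReal.ofReal_mul (by positivity)]
  gcongr
  exact le_iSup₂_of_le (c • φ) htest le_rfl

lemma MemBV.TV_one_ne_top {N : ℕ} (hN : 1 ≤ N) {u : (Fin N → ℝ) → ℝ} (hu : MemBV N u) :
    TV N 1 u ≠ ∞ := by
  refine ne_top_of_le_ne_top ?_ (TV_le_rpow_mul hN le_rfl (q := 2) (by norm_num) u)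
  exact ENNReal.mul_ne_top ENNReal.ofReal_ne_top hu.2.ne

lemma MemBV.TV_ne_top {N : ℕ} (hN : 1 ≤ N) {u : (Fin N → ℝ) → ℝ} (hu : MemBV N u)
    {p : ℝ≥0∞} (hp : 1 ≤ p) : TV N p u ≠ ∞ :=
  ne_top_of_le_ne_top (hu.TV_one_ne_top hN) (TV_anti le_rfl hp u)

lemma integrable_mul_diverg {N : ℕ} {u : (Fin N → ℝ) → ℝ} (hu : IntegrableOn u (Q N))
    {φ : (Fin N → ℝ) → (Fin N → ℝ)} (h1 : ContDiff ℝ (⊤ : ℕ∞) φ) (h2 : HasCompactSupport φ) :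
    IntegrableOn (fun x => u x * diverg φ x) (Q N) := by
  have hcont : Continuous (diverg φ) := by
    have := h1.continuous_fderiv (by simp)
    unfold diverg
    fun_prop
  have hcs : HasCompactSupport (diverg φ) :=
    (HasCompactSupport.fderiv ℝ h2).comp_left
      (g := fun A : (Fin N → ℝ) →L[ℝ] (Fin N → ℝ) => ∑ i, A (Pi.single i 1) i) (by simp)
  obtain ⟨C, hC⟩ := hcs.exists_bound_of_continuous hcont
  exact Integrable.mul_bdd hu hcont.aestronglyMeasurable (ae_of_all _ hC)

/-- The midpoint instance of convexity of `TV_p` on `L¹(Q)`. -/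
lemma two_mul_TV_midpoint_le {N : ℕ} (p : ℝ≥0∞) {u v : (Fin N → ℝ) → ℝ}
    (hu : IntegrableOn u (Q N)) (hv : IntegrableOn v (Q N)) :
    2 * TV N p ((1 / 2 : ℝ) • (u + v)) ≤ TV N p u + TV N p v := by
  rw [TV, ENNReal.mul_iSup]
  refine iSup_le fun φ => ?_
  rw [ENNReal.mul_iSup]
  refine iSup_le fun hφ => ?_
  have hiu := integrable_mul_diverg hu hφ.1 hφ.2.1
  have hiv := integrable_mul_diverg hv hφ.1 hφ.2.1
  have h : (2 : ℝ) * ∫ x in Q N, ((1 / 2 : ℝ) • (u + v)) x * diverg φ x =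
      (∫ x in Q N, u x * diverg φ x) + ∫ x in Q N, v x * diverg φ x := by
    rw [← integral_add hiu hiv, ← integral_const_mul]
    congr 1; ext x
    simp; ring
  have h2 : (2 : ℝ≥0∞) = ENNReal.ofReal 2 := by simp
  rw [h2, ← ENNReal.ofReal_mul (by norm_num), h]
  refine ENNReal.ofReal_add_le.trans (add_le_add ?_ ?_)
  · exact le_iSup₂_of_le φ hφ le_rfl
  · exact le_iSup₂_of_le φ hφ le_rfl

lemma MemBV.midpoint {N : ℕ} {u v : (Fin N → ℝ) → ℝ} (hu : MemBV N u) (hv : MemBV N v) :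
    MemBV N ((1 / 2 : ℝ) • (u + v)) := by
  refine ⟨(hu.1.add hv.1).smul (1 / 2 : ℝ), ?_⟩
  have h := (two_mul_TV_midpoint_le 2 hu.1 hv.1).trans_lt (ENNReal.add_lt_top.2 ⟨hu.2, hv.2⟩)
  exact lt_of_le_of_lt (le_mul_of_one_le_left' (by norm_num)) h

/-! ### Energy estimates -/

/-- The squared `L²(Q)` norm. -/
def sqL2 (N : ℕ) (w : (Fin N → ℝ) → ℝ) : ℝ≥0∞ := eLpNorm w 2 (μQ N) ^ 2

lemma sqL2_eq_lintegral (N : ℕ) (w : (Fin N → ℝ) → ℝ) :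
    sqL2 N w = ∫⁻ x, ENNReal.ofReal (w x ^ 2) ∂(μQ N) := by
  have h := eLpNorm_nnreal_pow_eq_lintegral (μ := μQ N) (f := w) (p := 2) (by norm_num)
  have h2 : ((2 : NNReal) : ℝ) = (2 : ℕ) := by norm_num
  rw [h2, ENNReal.rpow_natCast] at h
  rw [sqL2]
  refine Eq.trans ?_ (h.trans ?_)
  · norm_num
  · refine lintegral_congr fun x => ?_
    rw [ENNReal.rpow_natCast, ← ofReal_norm, ← ENNReal.ofReal_pow (norm_nonneg _)]
    simp

lemma sqL2_sub_comm (N : ℕ) (u v : (Fin N → ℝ) → ℝ) : sqL2 N (u - v) = sqL2 N (v - u) := by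
  rw [sqL2, sqL2, eLpNorm_sub_comm]

/-- The parallelogram law for `u - f` and `v - f`. -/
lemma sqL2_parallelogram {N : ℕ} {u v f : (Fin N → ℝ) → ℝ} (hu : IntegrableOn u (Q N))
    (hv : IntegrableOn v (Q N)) (hf : IntegrableOn f (Q N)) :
    4 * sqL2 N ((1 / 2 : ℝ) • (u + v) - f) + sqL2 N (u - v) =
      2 * sqL2 N (u - f) + 2 * sqL2 N (v - f) := by
  have hum : AEMeasurable u (μQ N) := hu.aemeasurable
  have hvm : AEMeasurable v (μQ N) := hv.aemeasurable
  have hfm : AEMeasurable f (μQ N) := hf.aemeasurable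
  simp only [sqL2_eq_lintegral]
  have c4 : (4 : ℝ≥0∞) = ENNReal.ofReal 4 := by simp
  have c2 : (2 : ℝ≥0∞) = ENNReal.ofReal 2 := by simp
  rw [← lintegral_const_mul' _ _ (by simp), ← lintegral_const_mul' _ _ (by simp),
    ← lintegral_const_mul' _ _ (by simp), ← lintegral_add_right', ← lintegral_add_right']
  · refine lintegral_congr fun x => ?_
    rw [c4, c2, ← ENNReal.ofReal_mul (by norm_num), ← ENNReal.ofReal_mul (by norm_num),
      ← ENNReal.ofReal_mul (by norm_num), ← ENNReal.ofReal_add (by positivity) (by positivity),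
      ← ENNReal.ofReal_add (by positivity) (by positivity)]
    congr 1
    simp
    ring
  · exact (((hvm.sub hfm).pow_const 2).ennreal_ofReal).const_mul _
  · exact ((hum.sub hvm).pow_const 2).ennreal_ofReal

section Energy

variable {N : ℕ} {f : (Fin N → ℝ) → ℝ} {α : ℝ} {p : ℝ≥0∞} {u v : (Fin N → ℝ) → ℝ}

lemma rof_eq (v : (Fin N → ℝ) → ℝ) :
    rof N f α p v = sqL2 N (v - f) + ENNReal.ofReal α * TV N p v := rfl

/-- The datum is a minimizer for `α = 0`. -/
lemma isMinimizer_zero (hf : MemBV N f) : IsMinimizer N f 0 p f :=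
  ⟨hf, fun v _ => by simp [rof]⟩

/-- Comparison with the competitor `f`. -/
lemma IsMinimizer.rof_le (h : IsMinimizer N f α p u) (hf : MemBV N f) :
    sqL2 N (u - f) + ENNReal.ofReal α * TV N p u ≤ ENNReal.ofReal α * TV N p f := by
  have := h.2 f hf
  simpa [rof_eq, sqL2] using this

lemma IsMinimizer.sqL2_ne_top (hN : 1 ≤ N) (hp : 1 ≤ p) (h : IsMinimizer N f α p u)
    (hf : MemBV N f) : sqL2 N (u - f) ≠ ∞ :=
  ne_top_of_le_ne_top (ENNReal.mul_ne_top ENNReal.ofReal_ne_top (hf.TV_ne_top hN hp))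
    (le_self_add.trans (h.rof_le hf))

/-- Strong convexity of the functional, through the midpoint competitor `(u + v) / 2`. -/
lemma IsMinimizer.strong (hN : 1 ≤ N) (hp : 1 ≤ p) (hα : 0 ≤ α) (h : IsMinimizer N f α p u)
    (hf : MemBV N f) (hv : MemBV N v) (hvf : sqL2 N (v - f) ≠ ∞) :
    2 * (sqL2 N (u - f)).toReal + (sqL2 N (u - v)).toReal + 2 * α * (TV N p u).toReal ≤
      2 * (sqL2 N (v - f)).toReal + 2 * α * (TV N p v).toReal := by
  set m : (Fin N → ℝ) → ℝ := (1 / 2 : ℝ) • (u + v) with hm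
  have hmB : MemBV N m := h.1.midpoint hv
  have hmin := h.2 m hmB
  have hpar := sqL2_parallelogram h.1.1 hv.1 hf.1
  have htv := two_mul_TV_midpoint_le p h.1.1 hv.1
  rw [← hm] at hpar htv
  rw [rof_eq, rof_eq] at hmin
  have huf := h.sqL2_ne_top hN hp hf
  have hR : 2 * sqL2 N (u - f) + 2 * sqL2 N (v - f) ≠ ∞ :=
    ENNReal.add_ne_top.2 ⟨ENNReal.mul_ne_top (by simp) huf, ENNReal.mul_ne_top (by simp) hvf⟩
  have hL := hR
  rw [← hpar] at hL
  obtain ⟨h4, huv⟩ := ENNReal.add_ne_top.1 hL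
  have hmf : sqL2 N (m - f) ≠ ∞ := by
    rintro e; simp [e] at h4
  have tu := h.1.TV_ne_top hN hp
  have tv := hv.TV_ne_top hN hp
  have tm := hmB.TV_ne_top hN hp
  have e1 := congrArg ENNReal.toReal hpar
  rw [ENNReal.toReal_add h4 huv, ENNReal.toReal_add (ENNReal.mul_ne_top (by simp) huf)
    (ENNReal.mul_ne_top (by simp) hvf)] at e1
  have e2 := ENNReal.toReal_mono (ENNReal.add_ne_top.2 ⟨tu, tv⟩) htv
  rw [ENNReal.toReal_add tu tv] at e2
  have au := ENNReal.mul_ne_top (ENNReal.ofReal_ne_top (r := α)) tu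
  have am := ENNReal.mul_ne_top (ENNReal.ofReal_ne_top (r := α)) tm
  have e3 := ENNReal.toReal_mono (ENNReal.add_ne_top.2 ⟨hmf, am⟩) hmin
  rw [ENNReal.toReal_add huf au, ENNReal.toReal_add hmf am] at e3
  simp only [ENNReal.toReal_mul, ENNReal.toReal_ofNat, ENNReal.toReal_ofReal hα] at e1 e2 e3
  have e4 := mul_le_mul_of_nonneg_left e2 hα
  nlinarith

/-- A minimizer has no more total variation than the datum. -/
lemma IsMinimizer.TV_le (hN : 1 ≤ N) (hp : 1 ≤ p) (hα : 0 < α) (h : IsMinimizer N f α p u)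
    (hf : MemBV N f) : (TV N p u).toReal ≤ (TV N p f).toReal := by
  have h1 := le_add_self.trans (h.rof_le hf)
  have h2 := (ENNReal.mul_le_mul_iff_right (ENNReal.ofReal_pos.2 hα).ne'
    ENNReal.ofReal_ne_top).1 h1
  exact ENNReal.toReal_mono (hf.TV_ne_top hN hp) h2

/-- The distance between two minimizers, from optimality of each tested with the other. -/
lemma IsMinimizer.dist_sq_le (hN : 1 ≤ N) {β : ℝ} {q : ℝ≥0∞} (hp : 1 ≤ p) (hq : 1 ≤ q)
    (hα : 0 ≤ α) (hβ : 0 ≤ β) (hf : MemBV N f) (hu : IsMinimizer N f α p u)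
    (hv : IsMinimizer N f β q v) :
    (sqL2 N (u - v)).toReal ≤
      α * ((TV N p v).toReal - (TV N p u).toReal) +
        β * ((TV N q u).toReal - (TV N q v).toReal) := by
  have h1 := hu.strong hN hp hα hf hv.1 (hv.sqL2_ne_top hN hq hf)
  have h2 := hv.strong hN hq hβ hf hu.1 (hu.sqL2_ne_top hN hp hf)
  rw [sqL2_sub_comm N v u] at h2
  linarith

lemma IsMinimizer.dist_ne_top (hN : 1 ≤ N) {β : ℝ} {q : ℝ≥0∞} (hp : 1 ≤ p) (hq : 1 ≤ q)
    (hf : MemBV N f) (hu : IsMinimizer N f α p u)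
    (hv : IsMinimizer N f β q v) : sqL2 N (u - v) ≠ ∞ := by
  have hpar := sqL2_parallelogram hu.1.1 hv.1.1 hf.1
  refine ne_top_of_le_ne_top ?_ (le_add_self.trans hpar.le)
  exact ENNReal.add_ne_top.2 ⟨ENNReal.mul_ne_top (by simp) (hu.sqL2_ne_top hN hp hf),
    ENNReal.mul_ne_top (by simp) (hv.sqL2_ne_top hN hq hf)⟩

/-- Dependence of the minimizer on the regularization parameter. -/
lemma IsMinimizer.dist_alpha (hN : 1 ≤ N) {β : ℝ} (hp : 1 ≤ p) (hα : 0 ≤ α) (hαβ : α ≤ β)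
    (hf : MemBV N f) (hu : IsMinimizer N f α p u) (hv : IsMinimizer N f β p v)
    (huf : α = 0 → u = f) :
    sqL2 N (u - v) ≤ ENNReal.ofReal (β - α) * TV N 1 f := by
  rw [← ENNReal.ofReal_toReal (hu.dist_ne_top hN hp hp hf hv),
    ← ENNReal.ofReal_toReal (hf.TV_one_ne_top hN), ← ENNReal.ofReal_mul (by linarith)]
  refine ENNReal.ofReal_le_ofReal ?_
  have h1 := hu.dist_sq_le hN hp hp hα (hα.trans hαβ) hf hv
  have h2 : (TV N p u).toReal ≤ (TV N p f).toReal := by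
    rcases hα.eq_or_lt with h0 | h0
    · rw [huf h0.symm]
    · exact hu.TV_le hN hp h0 hf
  have h3 := ENNReal.toReal_mono (hf.TV_one_ne_top hN) (TV_anti le_rfl hp f)
  have h4 : (TV N p u).toReal - (TV N p v).toReal ≤ (TV N 1 f).toReal := by
    linarith [ENNReal.toReal_nonneg (a := TV N p v)]
  have := mul_le_mul_of_nonneg_left h4 (sub_nonneg.2 hαβ)
  linarith

/-- A minimizer stays within `(2/3) α TV_1(f)` of the datum, in squared distance. -/
lemma IsMinimizer.three_mul_dist_datum (hN : 1 ≤ N) (hp : 1 ≤ p) (hα : 0 ≤ α)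
    (hf : MemBV N f) (hu : IsMinimizer N f α p u) :
    3 * (sqL2 N (u - f)).toReal ≤ 2 * α * (TV N 1 f).toReal := by
  have h0 : sqL2 N (f - f) = 0 := by simp [sqL2]
  have h1 := hu.strong hN hp hα hf hf (by rw [h0]; simp)
  have h3 := ENNReal.toReal_mono (hf.TV_one_ne_top hN) (TV_anti le_rfl hp f)
  have h4 := mul_le_mul_of_nonneg_left h3 hα
  have h5 := mul_nonneg hα (ENNReal.toReal_nonneg (a := TV N p u))
  rw [h0, ENNReal.toReal_zero] at h1
  linarith

/-- Dependence of the minimizer on the exponent: with `x = N^{-s}` and `1/p - 1/q ≤ s`, the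
squared distance is at most `4α(1 - x) TV_1(f)`. Optimality gives `α(1/x - 1) TV_1(f)`, which
suffices for `x ≥ 1/3`; for `x ≤ 1/3` the distances to the datum do. -/
lemma IsMinimizer.dist_exponent (hN : 1 ≤ N) {q : ℝ≥0∞} {s : ℝ} (hp : 1 ≤ p) (hpq : p ≤ q)
    (hs : recip p - recip q ≤ s) (hα : 0 < α)
    (hf : MemBV N f) (hu : IsMinimizer N f α p u) (hv : IsMinimizer N f α q v) :
    sqL2 N (u - v) ≤ 4 * (ENNReal.ofReal α * ENNReal.ofReal (1 - (N : ℝ) ^ (-s))) *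
      TV N 1 f := by
  have hq := hp.trans hpq
  have hN1 : (1 : ℝ) ≤ N := by exact_mod_cast hN
  have hNp : (0 : ℝ) < N := by linarith
  have hs0 : 0 ≤ s := by linarith [recip_anti hp hpq]
  set x : ℝ := (N : ℝ) ^ (-s) with hx
  have hxp : 0 < x := by positivity
  have hx1 : x ≤ 1 := Real.rpow_le_one_of_one_le_of_nonpos hN1 (by linarith)
  have hdt := hu.dist_ne_top hN hp hq hf hv
  have c4 : (4 : ℝ≥0∞) = ENNReal.ofReal 4 := by simp
  rw [← ENNReal.ofReal_toReal hdt, ← ENNReal.ofReal_toReal (hf.TV_one_ne_top hN), c4,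
    ← ENNReal.ofReal_mul hα.le, ← ENNReal.ofReal_mul (by norm_num),
    ← ENNReal.ofReal_mul (mul_nonneg (by norm_num) (mul_nonneg hα.le (by linarith)))]
  refine ENNReal.ofReal_le_ofReal ?_
  have hT : 0 ≤ (TV N 1 f).toReal := ENNReal.toReal_nonneg
  have hαT := mul_nonneg hα.le hT
  rcases le_total x (1 / 3) with hx3 | hx3
  · have h1 := hu.three_mul_dist_datum hN hp hα.le hf
    have h2 := hv.three_mul_dist_datum hN hq hα.le hf
    have huf := hu.sqL2_ne_top hN hp hf
    have hvf := hv.sqL2_ne_top hN hq hf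
    have e := ENNReal.toReal_mono (ENNReal.add_ne_top.2 ⟨ENNReal.mul_ne_top (by simp) huf,
      ENNReal.mul_ne_top (by simp) hvf⟩)
      (le_add_self.trans (sqL2_parallelogram hu.1.1 hv.1.1 hf.1).le)
    rw [ENNReal.toReal_add (ENNReal.mul_ne_top (by simp) huf)
      (ENNReal.mul_ne_top (by simp) hvf)] at e
    simp only [ENNReal.toReal_mul, ENNReal.toReal_ofNat] at e
    nlinarith [mul_le_mul_of_nonneg_right hx3 hαT]
  · have h1 := hu.dist_sq_le hN hp hq hα.le hα.le hf hv
    have h2 := ENNReal.toReal_mono (hu.1.TV_ne_top hN hp) (TV_anti hp hpq u)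
    have h3 := ENNReal.toReal_mono (ENNReal.mul_ne_top ENNReal.ofReal_ne_top
      (hv.1.TV_ne_top hN hq)) (TV_le_rpow_mul hN hp hpq v)
    rw [ENNReal.toReal_mul, ENNReal.toReal_ofReal (by positivity)] at h3
    have h4 : (TV N q v).toReal ≤ (TV N 1 f).toReal := (hv.TV_le hN hq hα hf).trans
      (ENNReal.toReal_mono (hf.TV_one_ne_top hN) (TV_anti le_rfl hq f))
    have h0 : 0 ≤ (TV N q v).toReal := ENNReal.toReal_nonneg
    have h5 : (N : ℝ) ^ (recip p - recip q) ≤ 1 / x := by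
      rw [hx, Real.rpow_neg hNp.le, one_div, inv_inv]
      exact Real.rpow_le_rpow_of_exponent_le hN1 hs
    have h6 : 1 / x ≤ 1 + 4 * (1 - x) := by
      rw [div_le_iff₀ hxp]; nlinarith
    have h7 : (TV N p v).toReal - (TV N q v).toReal ≤ 4 * (1 - x) * (TV N 1 f).toReal := by
      have := mul_le_mul_of_nonneg_right (h5.trans h6) h0
      have := mul_le_mul_of_nonneg_left h4 (show 0 ≤ 4 * (1 - x) by linarith)
      linarith
    have h8 : (TV N p v).toReal - (TV N p u).toReal + ((TV N q u).toReal - (TV N q v).toReal)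
      ≤ 4 * (1 - x) * (TV N 1 f).toReal := by linarith
    have := mul_le_mul_of_nonneg_left h8 hα.le
    linarith

end Energy

/-! ### Nearby grid points -/

lemma gridAlpha_subset {αU : ℝ} (hαU : 0 < αU) {l : ℕ} {a : ℝ} (ha : a ∈ gridAlpha αU l) :
    a ∈ Set.Icc 0 αU := by
  simp only [gridAlpha, Set.mem_iUnion, Set.mem_union, Set.mem_singleton_iff] at ha
  obtain ⟨k, -, ⟨i, rfl, hi⟩ | rfl⟩ := ha
  · exact ⟨by positivity, hi⟩
  · exact ⟨hαU.le, le_rfl⟩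

lemma one_le_of_mem_gridP {l : ℕ} {p : ℝ≥0∞} (hp : p ∈ gridP l) : 1 ≤ p := by
  rcases hp with rfl | ⟨k, i, hi, hik, -, rfl⟩
  · simp
  · rw [ENNReal.le_div_iff_mul_le (Or.inl (by norm_cast; omega)) (Or.inl (by simp)), one_mul]
    exact_mod_cast hik

lemma exists_gridAlpha {αU : ℝ} {l : ℕ} (hl : 1 ≤ l) {a : ℝ} (ha : a ∈ Set.Icc 0 αU) :
    ∃ b ∈ gridAlpha αU l, 0 ≤ b ∧ b ≤ a ∧ a - b ≤ 1 / l := by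
  have hlp : (0 : ℝ) < l := by exact_mod_cast hl
  have h1 : (⌊a * l⌋₊ : ℝ) / l ≤ a := by
    rw [div_le_iff₀ hlp]; exact Nat.floor_le (mul_nonneg ha.1 hlp.le)
  refine ⟨(⌊a * l⌋₊ : ℝ) / l, ?_, by positivity, h1, ?_⟩
  · simp only [gridAlpha, Set.mem_iUnion]
    exact ⟨l, by simpa using hl, Or.inl ⟨_, rfl, h1.trans ha.2⟩⟩
  · have := Nat.lt_floor_add_one (a * l)
    rw [sub_le_iff_le_add, ← add_div, le_div_iff₀ hlp]
    linarith

/-- The reciprocals of the grid exponents contain all `i/l` with `0 ≤ i ≤ l`, where `i = 0`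
comes from the exponent `∞`. -/
lemma exists_gridP {l : ℕ} (hl : 1 ≤ l) {p : ℝ≥0∞} (hp : 1 ≤ p) :
    ∃ q ∈ gridP l, p ≤ q ∧ recip p - recip q ≤ 1 / l := by
  have hlp : (0 : ℝ) < l := by exact_mod_cast hl
  have hf := Nat.lt_floor_add_one (recip p * l)
  have hf' := Nat.floor_le (mul_nonneg (recip_nonneg p) hlp.le)
  set i := ⌊recip p * l⌋₊ with hi
  rcases Nat.eq_zero_or_pos i with h0 | h0
  · refine ⟨∞, Or.inl rfl, le_top, ?_⟩
    rw [h0] at hf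
    have : recip ∞ = 0 := by simp [recip]
    rw [this, le_div_iff₀ hlp]; simp at hf; linarith
  · have hil : i ≤ l := by
      have : (i : ℝ) ≤ l := by nlinarith [recip_le_one hp]
      exact_mod_cast this
    have hr : recip ((l : ℝ≥0∞) / i) = i / l := by
      rw [recip, ENNReal.inv_div (by simp) (by simp; omega)]
      simp
    have hpt : p⁻¹ ≠ ∞ := ENNReal.inv_ne_top.2 (by rintro rfl; simp at hp)
    refine ⟨(l : ℝ≥0∞) / i, Or.inr ⟨l, i, h0, hil, le_rfl, rfl⟩, ?_, ?_⟩
    · rw [← ENNReal.inv_le_inv]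
      have hqt : ((l : ℝ≥0∞) / i)⁻¹ ≠ ∞ := ENNReal.inv_ne_top.2
        (ENNReal.div_pos (by simp; omega) (by simp)).ne'
      rw [← ENNReal.toReal_le_toReal hqt hpt]
      change recip ((l : ℝ≥0∞) / i) ≤ recip p
      rw [hr, div_le_iff₀ hlp]; exact hf'
    · rw [hr, sub_le_iff_le_add, ← add_div, le_div_iff₀ hlp]; linarith

lemma eLpNorm_le_of_sqL2_le {N : ℕ} {w : (Fin N → ℝ) → ℝ} {c : ℝ≥0∞} (h : sqL2 N w ≤ c) :
    eLpNorm w 2 (μQ N) ≤ c ^ ((1 : ℝ) / 2) := by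
  have := ENNReal.rpow_le_rpow h (show (0 : ℝ) ≤ 1 / 2 by norm_num)
  rwa [sqL2, ← ENNReal.rpow_natCast, ← ENNReal.rpow_mul, show ((2 : ℕ) : ℝ) * (1 / 2) = 1 by
    norm_num, ENNReal.rpow_one] at this

/-- Quantitative approximation of the bilevel optimum by grid search:
if `(α*,p*)` minimizes the assessment function `A` over `T = [0,α_U] × [1,∞]` and
`(α_l,p_l)` minimizes `A` over the finite training ground `T_l`, then
`0 ≤ A(α_l,p_l) − A(α*,p*) ≤ ((1/l)^{1/2} + 2(α_U(1−N^{−1/√l}))^{1/2}) (TV_1(u_η))^{1/2}`. -/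
theorem grid_search_error_estimate (N : ℕ) (hN : 1 ≤ N)
    (uη : (Fin N → ℝ) → ℝ) (huη : MemBV N uη)
    (uc : (Fin N → ℝ) → ℝ) (huc : MemBV N uc)
    (αU : ℝ) (hαU : 0 < αU) (l : ℕ) (hl : 1 ≤ l)
    (U : ℝ → ℝ≥0∞ → (Fin N → ℝ) → ℝ)
    (hU0 : ∀ p : ℝ≥0∞, 1 ≤ p → U 0 p = uη)
    (hU : ∀ (α : ℝ) (p : ℝ≥0∞), 0 < α → 1 ≤ p → IsUniqueMinimizer N uη α p (U α p))
    (αs : ℝ) (ps : ℝ≥0∞) (hαs : αs ∈ Set.Icc 0 αU) (hps : 1 ≤ ps)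
    (hmin : ∀ α ∈ Set.Icc 0 αU, ∀ p : ℝ≥0∞, 1 ≤ p →
      eLpNorm (U αs ps - uc) 2 (μQ N) ≤ eLpNorm (U α p - uc) 2 (μQ N))
    (αl : ℝ) (pl : ℝ≥0∞) (hαl : αl ∈ gridAlpha αU l) (hpl : pl ∈ gridP l)
    (hminl : ∀ α ∈ gridAlpha αU l, ∀ p ∈ gridP l,
      eLpNorm (U αl pl - uc) 2 (μQ N) ≤ eLpNorm (U α p - uc) 2 (μQ N)) :
    eLpNorm (U αs ps - uc) 2 (μQ N) ≤ eLpNorm (U αl pl - uc) 2 (μQ N) ∧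
    eLpNorm (U αl pl - uc) 2 (μQ N) ≤ eLpNorm (U αs ps - uc) 2 (μQ N) +
      (ENNReal.ofReal ((1 : ℝ) / l) ^ ((1 : ℝ)/2) +
          2 * (ENNReal.ofReal αU *
            ENNReal.ofReal (1 - (N : ℝ) ^ (-(1 / Real.sqrt l)))) ^ ((1 : ℝ)/2)) *
        TV N 1 uη ^ ((1 : ℝ)/2) := by
  have hmz : ∀ α p, 0 ≤ α → 1 ≤ p → IsMinimizer N uη α p (U α p) := by
    intro α p hα hp
    rcases hα.eq_or_lt with rfl | h
    · rw [hU0 p hp]; exact isMinimizer_zero huη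
    · exact (hU α p h hp).1
  refine ⟨hmin αl (gridAlpha_subset hαU hαl) pl (one_le_of_mem_gridP hpl), ?_⟩
  obtain ⟨a, ha, ha0, has, hal⟩ := exists_gridAlpha hl hαs
  obtain ⟨q, hq, hpq, hql⟩ := exists_gridP hl hps
  have hq1 := one_le_of_mem_gridP hq
  have hlp : (1 : ℝ) ≤ l := by exact_mod_cast hl
  have hm1 := hmz αs ps hαs.1 hps
  have hm2 := hmz a ps ha0 hps
  have hm3 := hmz a q ha0 hq1
  -- the grid is finer in `1/p` than needed: `1/l ≤ 1/√l`
  have hs : recip ps - recip q ≤ 1 / Real.sqrt l := by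
    refine hql.trans (one_div_le_one_div_of_le (by positivity) ?_)
    rw [Real.sqrt_le_left (by linarith)]
    nlinarith
  have hA : eLpNorm (U a ps - U αs ps) 2 (μQ N) ≤
      (ENNReal.ofReal ((1 : ℝ) / l) * TV N 1 uη) ^ ((1 : ℝ) / 2) := by
    refine eLpNorm_le_of_sqL2_le ((hm2.dist_alpha hN hps ha0 has huη hm1 ?_).trans ?_)
    · rintro rfl; exact hU0 ps hps
    · gcongr
  have hP : eLpNorm (U a q - U a ps) 2 (μQ N) ≤
      (4 * (ENNReal.ofReal αU * ENNReal.ofReal (1 - (N : ℝ) ^ (-(1 / Real.sqrt l)))) *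
        TV N 1 uη) ^ ((1 : ℝ) / 2) := by
    rcases ha0.eq_or_lt with h | h
    · rw [← h, hU0 q hq1, hU0 ps hps]; simp
    · rw [eLpNorm_sub_comm]
      refine eLpNorm_le_of_sqL2_le ((hm2.dist_exponent hN hps hpq hs h huη hm3).trans ?_)
      have := has.trans hαs.2
      gcongr
  have hmeas : ∀ {v}, MemBV N v → AEStronglyMeasurable v (μQ N) := fun hv =>
    hv.1.aestronglyMeasurable
  have h4 : (4 : ℝ≥0∞) ^ ((1 : ℝ) / 2) = 2 := by
    rw [show (4 : ℝ≥0∞) = 2 ^ (2 : ℝ) by norm_num, ← ENNReal.rpow_mul]; norm_num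
  have hhalf : (0 : ℝ) ≤ 1 / 2 := by norm_num
  rw [ENNReal.mul_rpow_of_nonneg _ _ hhalf] at hA
  rw [ENNReal.mul_rpow_of_nonneg _ _ hhalf, ENNReal.mul_rpow_of_nonneg 4 _ hhalf, h4] at hP
  have hdec : U a q - uc = (U αs ps - uc) + ((U a ps - U αs ps) + (U a q - U a ps)) := by abel
  have m1 := hmeas hm1.1
  have m2 := hmeas hm2.1
  have m3 := hmeas hm3.1
  calc eLpNorm (U αl pl - uc) 2 (μQ N) ≤ eLpNorm (U a q - uc) 2 (μQ N) := hminl a ha q hq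
    _ ≤ eLpNorm (U αs ps - uc) 2 (μQ N) +
        (eLpNorm (U a ps - U αs ps) 2 (μQ N) + eLpNorm (U a q - U a ps) 2 (μQ N)) := by
      rw [hdec]
      refine (eLpNorm_add_le (m1.sub (hmeas huc)) ((m2.sub m1).add (m3.sub m2))
        (by norm_num)).trans ?_
      gcongr
      exact eLpNorm_add_le (m2.sub m1) (m3.sub m2) (by norm_num)
    _ ≤ _ := by
      rw [add_mul]
      gcongr

end
end
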